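/- Let A be a unital *-algebra over C = R(i), R an ordered ring. Then A has sufficiently many positive linear functionals if and only if A has a faithful *-representation on some pre-Hilbert space over C. In this case A is *-isomorphic to a *-subalgebra of B(H) for some pre-Hilbert space H over C. -/

import Mathlib

open Polynomial

/-- An *ordered ring*: positivity cone `P` with `P·P ⊆ P`, `P + P ⊆ P`,
`R = −P ∪ {0} ∪ P` disjointly. -/
def IsOrderedCone {R : Type*} [CommRing R] (P : Set R) : Prop :=
  (∀ a ∈ P, ∀ b ∈ P, a * b ∈ P) ∧
  (∀ a ∈ P, ∀ b ∈ P, a + b ∈ P) ∧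
  (∀ a : R, a ∈ P ∨ a = 0 ∨ -a ∈ P) ∧
  (∀ a ∈ P, a ≠ (0 : R)) ∧
  (∀ a ∈ P, -a ∉ P)

noncomputable section

set_option maxRecDepth 8000

/-- The ring extension `C = R(i)` of `R` by a square root `i` of `-1`. -/
abbrev Cplx (R : Type*) [CommRing R] := AdjoinRoot (X ^ 2 + 1 : R[X])

/-- The square root of `-1` in `C = R(i)`. -/
def Cplx.I (R : Type*) [CommRing R] : Cplx R := AdjoinRoot.root _

/-- Complex conjugation `z ↦ z̄` on `C = R(i)`: the ring endomorphism fixing `R`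
and sending `i` to `-i`. -/
def Cplx.conj {R : Type*} [CommRing R] : Cplx R →+* Cplx R :=
  AdjoinRoot.lift (algebraMap R _) (-(AdjoinRoot.root _)) (by
    have h := AdjoinRoot.eval₂_root (X ^ 2 + 1 : R[X])
    rw [AdjoinRoot.algebraMap_eq]
    simp only [eval₂_add, eval₂_pow, eval₂_X, eval₂_one, neg_sq] at h ⊢
    exact h)

/-- `z ∈ C = R(i)` is *nonnegative* (w.r.t. the cone `P` of `R`) if it lies in `R`
and is zero or positive there. -/
def Cplx.nonneg {R : Type*} [CommRing R] (P : Set R) (z : Cplx R) : Prop :=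
  ∃ r : R, (r ∈ P ∨ r = 0) ∧ z = algebraMap R (Cplx R) r

/-- `z ∈ C = R(i)` is *positive* if it lies in `R` and is positive there. -/
def Cplx.pos {R : Type*} [CommRing R] (P : Set R) (z : Cplx R) : Prop :=
  ∃ r ∈ P, z = algebraMap R (Cplx R) r

/-- `z ≤ w` in `C = R(i)` iff `w - z` is nonnegative. -/
def Cplx.le {R : Type*} [CommRing R] (P : Set R) (z w : Cplx R) : Prop :=
  Cplx.nonneg P (w - z)

universe u v

/-- A `*`-algebra over `C = R(i)`: an associative unital `C`-algebra `A` equipped with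
an involutive anti-linear anti-automorphism (a `*`-involution). -/
structure StarStructure (R : Type*) [CommRing R] (A : Type*) [Ring A]
    [Algebra (Cplx R) A] where
  star : A → A
  star_add : ∀ a b : A, star (a + b) = star a + star b
  star_mul : ∀ a b : A, star (a * b) = star b * star a
  star_star : ∀ a : A, star (star a) = a
  star_smul : ∀ (z : Cplx R) (a : A), star (z • a) = Cplx.conj z • star a
  star_one : star (1 : A) = 1

/-- A `C`-linear functional `ω : A → C` is *positive* if `ω(a* a) ≥ 0` for all `a`. -/
def IsPosFunctional {R : Type*} [CommRing R] (P : Set R) {A : Type*} [Ring A]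
    [Algebra (Cplx R) A] (S : StarStructure R A) (ω : A → Cplx R) : Prop :=
  (∀ a b : A, ω (a + b) = ω a + ω b) ∧
  (∀ (z : Cplx R) (a : A), ω (z • a) = z * ω a) ∧
  (∀ a : A, Cplx.nonneg P (ω (S.star a * a)))

/-- A *pre-Hilbert space* structure over `C = R(i)`: an inner product which is
`C`-linear in the second argument, Hermitian, and positive definite. -/
structure PreInner (R : Type*) [CommRing R] (P : Set R) (H : Type*) [AddCommGroup H]
    [Module (Cplx R) H] where
  inner : H → H → Cplx R
  inner_add_right : ∀ φ ψ χ : H, inner φ (ψ + χ) = inner φ ψ + inner φ χ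
  inner_smul_right : ∀ (z : Cplx R) (φ ψ : H), inner φ (z • ψ) = z * inner φ ψ
  inner_herm : ∀ φ ψ : H, inner φ ψ = Cplx.conj (inner ψ φ)
  inner_posdef : ∀ φ : H, φ ≠ 0 → Cplx.pos P (inner φ φ)

/-- A `*`-representation of a `*`-algebra `A` over `C = R(i)` on a pre-Hilbert space
over `C`: a unital homomorphism into the adjointable operators `B(H)`. -/
structure StarRep (R : Type u) [CommRing R] (P : Set R) (A : Type v) [Ring A]
    [Algebra (Cplx R) A] (S : StarStructure R A) : Type (max u v (w + 1)) where
  carrier : Type w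
  [grp : AddCommGroup carrier]
  [mod : Module (Cplx R) carrier]
  ip : PreInner R P carrier
  π : A → carrier → carrier
  π_add_vec : ∀ (a : A) (φ ψ : carrier), π a (φ + ψ) = π a φ + π a ψ
  π_smul_vec : ∀ (a : A) (z : Cplx R) (φ : carrier), π a (z • φ) = z • π a φ
  π_one : ∀ φ : carrier, π 1 φ = φ
  π_add : ∀ (a b : A) (φ : carrier), π (a + b) φ = π a φ + π b φ
  π_smul : ∀ (z : Cplx R) (a : A) (φ : carrier), π (z • a) φ = z • π a φ
  π_mul : ∀ (a b : A) (φ : carrier), π (a * b) φ = π a (π b φ)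
  π_star : ∀ (a : A) (φ ψ : carrier),
    ip.inner (π a φ) ψ = ip.inner φ (π (S.star a) ψ)

/-- `A` has *sufficiently many positive linear functionals* if every nonzero Hermitian
element has a nonzero expectation value in some positive linear functional. -/
def HasSufficientlyManyPos {R : Type*} [CommRing R] (P : Set R) {A : Type*} [Ring A]
    [Algebra (Cplx R) A] (S : StarStructure R A) : Prop :=
  ∀ h : A, h ≠ 0 → S.star h = h →
    ∃ ω : A → Cplx R, IsPosFunctional P S ω ∧ ω h ≠ 0

section Helpers

variable {R : Type u} [CommRing R]

theorem Cplx.I_mul_I : Cplx.I R * Cplx.I R = -1 := by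
  have h := AdjoinRoot.eval₂_root (X ^ 2 + 1 : R[X])
  simp only [eval₂_add, eval₂_pow, eval₂_X, eval₂_one] at h
  unfold Cplx.I
  linear_combination h

theorem Cplx.conj_I : Cplx.conj (Cplx.I R) = -Cplx.I R := by
  unfold Cplx.conj Cplx.I
  exact AdjoinRoot.lift_root _

theorem Cplx.conj_alg (r : R) :
    Cplx.conj (algebraMap R (Cplx R) r) = algebraMap R (Cplx R) r := by
  unfold Cplx.conj
  exact AdjoinRoot.lift_of _

theorem Cplx.decomp (z : Cplx R) : ∃ x y : R,
    z = algebraMap R (Cplx R) x + algebraMap R (Cplx R) y * Cplx.I R := by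
  induction z using AdjoinRoot.induction_on with
  | ih p =>
    induction p using Polynomial.induction_on' with
    | add p q hp hq =>
      obtain ⟨x, y, h⟩ := hp
      obtain ⟨x', y', h'⟩ := hq
      refine ⟨x + x', y + y', ?_⟩
      rw [map_add, h, h', map_add, map_add]
      ring
    | monomial n a =>
      induction n with
      | zero =>
        refine ⟨a, 0, ?_⟩
        rw [map_zero, zero_mul, add_zero]
        rfl
      | succ n ih =>
        obtain ⟨x, y, h⟩ := ih
        refine ⟨-y, x, ?_⟩
        rw [← monomial_mul_X, map_mul, h, AdjoinRoot.mk_X, map_neg]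
        change _ * Cplx.I R = _
        linear_combination (algebraMap R (Cplx R) y) * Cplx.I_mul_I (R := R)

theorem Cplx.uniq (x y : R)
    (h : algebraMap R (Cplx R) x + algebraMap R (Cplx R) y * Cplx.I R = 0) :
    x = 0 ∧ y = 0 := by
  nontriviality R
  have h1 : AdjoinRoot.mk (X ^ 2 + 1 : R[X]) (C x + C y * X) = 0 := by
    rw [map_add, map_mul, AdjoinRoot.mk_X]
    exact h
  rw [AdjoinRoot.mk_eq_zero] at h1
  have hm : (X ^ 2 + 1 : R[X]).Monic := by
    have := monic_X_pow_add_C (R := R) (n := 2) 1 (by norm_num)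
    simpa using this
  have hd : (X ^ 2 + 1 : R[X]).degree = 2 := by
    have := degree_X_pow_add_C (R := R) (n := 2) (by norm_num) 1
    simpa using this
  have h0 : (C x + C y * X : R[X]) = 0 := by
    by_contra hne
    refine hm.not_dvd_of_degree_lt hne ?_ h1
    rw [hd, add_comm]
    exact lt_of_le_of_lt degree_linear_le (by norm_num)
  constructor
  · have := congrArg (fun p => coeff p 0) h0
    simpa using this
  · have := congrArg (fun p => coeff p 1) h0
    simpa using this

theorem Cplx.alg_inj {x y : R} (h : algebraMap R (Cplx R) x = algebraMap R (Cplx R) y) :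
    x = y := by
  have := (Cplx.uniq (x - y) 0 (by rw [map_sub, h]; simp)).1
  exact sub_eq_zero.1 this

theorem Cplx.conj_conj (z : Cplx R) : Cplx.conj (Cplx.conj z) = z := by
  obtain ⟨x, y, rfl⟩ := Cplx.decomp z
  simp only [map_add, map_mul, Cplx.conj_alg, Cplx.conj_I, map_neg, neg_neg]

variable {P : Set R}

theorem IsOrderedCone.two_inj (hP : IsOrderedCone P) {r : R} (h : r + r = 0) : r = 0 := by
  obtain ⟨_, ha, ht, h0, hn⟩ := hP
  rcases ht r with h1 | h1 | h1
  · exact absurd h (h0 _ (ha _ h1 _ h1))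
  · exact h1
  · exact absurd (by linear_combination -h) (h0 _ (ha _ h1 _ h1))

theorem IsOrderedCone.sq (hP : IsOrderedCone P) (r : R) : r * r ∈ P ∨ r = 0 := by
  obtain ⟨hm, ha, ht, h0, hn⟩ := hP
  rcases ht r with h1 | h1 | h1
  · exact Or.inl (hm _ h1 _ h1)
  · exact Or.inr h1
  · left
    have := hm _ h1 _ h1
    rwa [neg_mul_neg] at this

theorem Cplx.two_inj (hP : IsOrderedCone P) {z w : Cplx R} (h : z + z = w + w) : z = w := by
  obtain ⟨x, y, hz⟩ := Cplx.decomp (z - w)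
  have h2 := Cplx.uniq (x + x) (y + y) (by
    rw [map_add, map_add]
    linear_combination h - 2 * hz)
  rw [hP.two_inj h2.1, hP.two_inj h2.2] at hz
  simp only [map_zero, zero_mul, add_zero] at hz
  exact sub_eq_zero.1 hz

theorem Cplx.normSq (hP : IsOrderedCone P) (z : Cplx R) :
    z = 0 ∨ ∃ n ∈ P, z * Cplx.conj z = algebraMap R (Cplx R) n := by
  obtain ⟨x, y, rfl⟩ := Cplx.decomp z
  have key : (algebraMap R (Cplx R) x + algebraMap R (Cplx R) y * Cplx.I R) *
      Cplx.conj (algebraMap R (Cplx R) x + algebraMap R (Cplx R) y * Cplx.I R)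
      = algebraMap R (Cplx R) (x * x + y * y) := by
    simp only [map_add, map_mul, Cplx.conj_alg, Cplx.conj_I]
    linear_combination -(algebraMap R (Cplx R) y) ^ 2 * Cplx.I_mul_I (R := R)
  rcases hP.sq x with hx | rfl
  · right
    refine ⟨_, ?_, key⟩
    rcases hP.sq y with hy | rfl
    · exact hP.2.1 _ hx _ hy
    · simpa using hx
  · rcases hP.sq y with hy | rfl
    · right
      refine ⟨_, ?_, key⟩
      simpa using hy
    · left
      simp

theorem Cplx.nonneg_conj {z : Cplx R} (h : Cplx.nonneg P z) : Cplx.conj z = z := by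
  obtain ⟨r, _, rfl⟩ := h
  exact Cplx.conj_alg r

theorem Cplx.nonneg_zero : Cplx.nonneg P (0 : Cplx R) := ⟨0, Or.inr rfl, by simp⟩

theorem Cplx.nonneg_add (hP : IsOrderedCone P) {z w : Cplx R} (hz : Cplx.nonneg P z)
    (hw : Cplx.nonneg P w) : Cplx.nonneg P (z + w) := by
  obtain ⟨r, hr, rfl⟩ := hz
  obtain ⟨s, hs, rfl⟩ := hw
  refine ⟨r + s, ?_, by simp⟩
  rcases hr with hr | rfl
  · rcases hs with hs | rfl
    · exact Or.inl (hP.2.1 _ hr _ hs)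
    · simpa using Or.inl hr
  · simpa using hs

theorem Cplx.nonneg_sum (hP : IsOrderedCone P) {ι : Type*} (s : Finset ι) (f : ι → Cplx R)
    (h : ∀ i ∈ s, Cplx.nonneg P (f i)) : Cplx.nonneg P (∑ i ∈ s, f i) :=
  Finset.sum_induction f (Cplx.nonneg P) (fun _ _ => Cplx.nonneg_add hP) Cplx.nonneg_zero h

/-- Cauchy-Schwarz (degenerate part) for a positive semidefinite Hermitian form. -/
theorem semi_null (hP : IsOrderedCone P) {V : Type*} [AddCommGroup V] [Module (Cplx R) V]
    (B : V → V → Cplx R)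
    (hadd : ∀ φ ψ χ : V, B φ (ψ + χ) = B φ ψ + B φ χ)
    (hsmul : ∀ (z : Cplx R) (φ ψ : V), B φ (z • ψ) = z * B φ ψ)
    (hherm : ∀ φ ψ : V, B φ ψ = Cplx.conj (B ψ φ))
    (hnn : ∀ φ, Cplx.nonneg P (B φ φ)) (f : V) (hf : B f f = 0) (g : V) : B g f = 0 := by
  have hadd' : ∀ φ ψ χ : V, B (φ + ψ) χ = B φ χ + B ψ χ := by
    intro φ ψ χ
    rw [hherm, hadd, map_add, ← hherm, ← hherm]
  have hsmul' : ∀ (z : Cplx R) (φ ψ : V), B (z • φ) ψ = Cplx.conj z * B φ ψ := by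
    intro z φ ψ
    rw [hherm, hsmul, map_mul, ← hherm]
  rcases Cplx.normSq hP (B g f) with h | ⟨n, hn, hc⟩
  · exact h
  exfalso
  obtain ⟨q, hq, hgg⟩ := hnn g
  obtain ⟨r, hr, hQ⟩ := hnn (algebraMap R (Cplx R) n • g +
    (-algebraMap R (Cplx R) (q + 1) * Cplx.conj (B g f)) • f)
  simp only [hadd, hadd', hsmul, hsmul', hf, hgg, map_mul, map_neg, Cplx.conj_alg,
    Cplx.conj_conj, hherm f g] at hQ
  have hr' : r = -(n * n * (q + 1 + 1)) := by
    apply Cplx.alg_inj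
    rw [← hQ]
    simp only [map_neg, map_mul, map_add, map_one]
    linear_combination (-2 * algebraMap R (Cplx R) n * (algebraMap R (Cplx R) q + 1)) * hc
  have h1 : (1 : R) ∈ P := by
    rcases hP.sq (1 : R) with h | h
    · simpa using h
    · exact absurd (by rw [← mul_one n, h, mul_zero]) (hP.2.2.2.1 n hn)
  have hq2 : q + 1 + 1 ∈ P := by
    rcases hq with hq | rfl
    · exact hP.2.1 _ (hP.2.1 _ hq _ h1) _ h1
    · rw [zero_add]
      exact hP.2.1 _ h1 _ h1
  have hpos := hP.1 _ (hP.1 _ hn _ hn) _ hq2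
  rcases hr with hr | hr
  · rw [hr'] at hr
    exact hP.2.2.2.2 _ hpos hr
  · rw [hr', neg_eq_zero] at hr
    exact hP.2.2.2.1 _ hpos hr

variable {A : Type v} [Ring A] [Algebra (Cplx R) A] {S : StarStructure R A}

theorem IsPosFunctional.herm (hP : IsOrderedCone P) {ω : A → Cplx R}
    (hω : IsPosFunctional P S ω) (a b : A) :
    ω (S.star a * b) = Cplx.conj (ω (S.star b * a)) := by
  obtain ⟨hadd, hsmul, hnn⟩ := hω
  have h1 := Cplx.nonneg_conj (hnn (a + b))
  have h2 := Cplx.nonneg_conj (hnn (a + Cplx.I R • b))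
  have ha := Cplx.nonneg_conj (hnn a)
  have hb := Cplx.nonneg_conj (hnn b)
  simp only [S.star_add, S.star_smul, add_mul, mul_add, smul_mul_assoc, mul_smul_comm, hadd,
    hsmul, map_add, map_mul, Cplx.conj_I, map_neg, ha, hb, neg_neg] at h1 h2
  apply Cplx.two_inj hP
  generalize Cplx.conj (ω (S.star b * a)) = q' at *
  generalize Cplx.conj (ω (S.star a * b)) = p' at *
  generalize ω (S.star b * a) = q at *
  generalize ω (S.star a * b) = p at *
  linear_combination -h1 + Cplx.I R * h2 + (p - q + p' - q') * Cplx.I_mul_I (R := R)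

/-- The GNS construction from a positive semidefinite form. -/
theorem exists_rep_of_semi (hP : IsOrderedCone P) {V : Type (max u v)} [AddCommGroup V]
    [Module (Cplx R) V] (B : V → V → Cplx R)
    (hadd : ∀ φ ψ χ : V, B φ (ψ + χ) = B φ ψ + B φ χ)
    (hsmul : ∀ (z : Cplx R) (φ ψ : V), B φ (z • ψ) = z * B φ ψ)
    (hherm : ∀ φ ψ : V, B φ ψ = Cplx.conj (B ψ φ))
    (hnn : ∀ φ, Cplx.nonneg P (B φ φ))
    (T : A → V →ₗ[Cplx R] V)
    (T_one : ∀ φ, T 1 φ = φ)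
    (T_add : ∀ a b φ, T (a + b) φ = T a φ + T b φ)
    (T_smul : ∀ (z : Cplx R) a φ, T (z • a) φ = z • T a φ)
    (T_mul : ∀ a b φ, T (a * b) φ = T a (T b φ))
    (T_star : ∀ a φ ψ, B (T a φ) ψ = B φ (T (S.star a) ψ)) :
    ∃ ρ : StarRep.{u, v, max u v} R P A S, ∀ a b, ρ.π a = ρ.π b →
      ∀ φ ψ, B φ (T a ψ) = B φ (T b ψ) := by
  have hneg : ∀ φ ψ, B φ (-ψ) = - B φ ψ := by
    intro φ ψ
    rw [← neg_one_smul (Cplx R), hsmul, neg_one_mul]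
  have hsub : ∀ φ ψ χ, B φ (ψ - χ) = B φ ψ - B φ χ := by
    intro φ ψ χ
    rw [sub_eq_add_neg, hadd, hneg, sub_eq_add_neg]
  let N : Submodule (Cplx R) V :=
    { carrier := {f | ∀ g, B g f = 0}
      add_mem' := fun {a b} ha hb g => by rw [hadd, ha g, hb g, add_zero]
      zero_mem' := fun g => by rw [← zero_smul (Cplx R) (0 : V), hsmul, zero_mul]
      smul_mem' := fun z a ha g => by rw [hsmul, ha g, mul_zero] }
  have hT : ∀ a, N ≤ N.comap (T a) := by
    intro a f hf g
    have := T_star (S.star a) g f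
    rw [S.star_star] at this
    rw [← this]
    exact hf _
  have hr : ∀ φ ψ χ, N.quotientRel ψ χ → B φ ψ = B φ χ := by
    intro φ ψ χ h
    rw [Submodule.quotientRel_def] at h
    have := h φ
    rw [hsub] at this
    exact sub_eq_zero.1 this
  let ip : PreInner R P (V ⧸ N) :=
    { inner := fun x y => Quotient.liftOn₂' x y B (by
        intro a b c d h1 h2
        rw [hr a b d h2, hherm a, hr d a c h1, ← hherm])
      inner_add_right := by
        rintro ⟨φ⟩ ⟨ψ⟩ ⟨χ⟩
        exact hadd φ ψ χ
      inner_smul_right := by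
        rintro z ⟨φ⟩ ⟨ψ⟩
        exact hsmul z φ ψ
      inner_herm := by
        rintro ⟨φ⟩ ⟨ψ⟩
        exact hherm φ ψ
      inner_posdef := by
        rintro ⟨φ⟩ hφ
        obtain ⟨r, hr, h⟩ := hnn φ
        rcases hr with hr | rfl
        · exact ⟨r, hr, h⟩
        · exfalso
          apply hφ
          refine (Submodule.Quotient.mk_eq_zero N).2 ?_
          exact semi_null hP B hadd hsmul hherm hnn φ (by rw [h, map_zero]) }
  refine ⟨{ carrier := V ⧸ N
            ip := ip
            π := fun a => N.mapQ N (T a) (hT a)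
            π_add_vec := fun a => map_add _
            π_smul_vec := fun a => map_smul _
            π_one := ?_
            π_add := ?_
            π_smul := ?_
            π_mul := ?_
            π_star := ?_ }, ?_⟩
  · rintro ⟨φ⟩
    exact congrArg (Submodule.Quotient.mk (p := N)) (T_one φ)
  · rintro a b ⟨φ⟩
    exact congrArg (Submodule.Quotient.mk (p := N)) (T_add a b φ)
  · rintro z a ⟨φ⟩
    exact congrArg (Submodule.Quotient.mk (p := N)) (T_smul z a φ)
  · rintro a b ⟨φ⟩
    exact congrArg (Submodule.Quotient.mk (p := N)) (T_mul a b φ)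
  · rintro a ⟨φ⟩ ⟨ψ⟩
    exact T_star a φ ψ
  · intro a b h φ ψ
    have h1 : (Submodule.Quotient.mk (T a ψ) : V ⧸ N) = Submodule.Quotient.mk (T b ψ) :=
      congrFun h (Submodule.Quotient.mk ψ)
    have h2 := (Submodule.Quotient.eq N).1 h1 φ
    rw [hsub] at h2
    exact sub_eq_zero.1 h2

/-- Direct sum of all GNS representations. -/
theorem exists_universal_rep (hP : IsOrderedCone P) :
    ∃ ρ : StarRep.{u, v, max u v} R P A S, ∀ a b, ρ.π a = ρ.π b →
      ∀ ω : A → Cplx R, IsPosFunctional P S ω → ω a = ω b := by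
  classical
  let J := {ω : A → Cplx R // IsPosFunctional P S ω}
  have h0 : ∀ ω : J, ω.1 0 = 0 := by
    intro ω
    rw [← zero_smul (Cplx R) (0 : A), ω.2.2.1, zero_mul]
  let B : (J →₀ A) → (J →₀ A) → Cplx R := fun f g => g.sum fun ω b => ω.1 (S.star (f ω) * b)
  have hB : ∀ (f g : J →₀ A) (s : Finset J), g.support ⊆ s →
      B f g = ∑ ω ∈ s, ω.1 (S.star (f ω) * g ω) := by
    intro f g s hs
    exact Finsupp.sum_of_support_subset _ hs _ (fun ω _ => by rw [mul_zero, h0])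
  let T : A → (J →₀ A) →ₗ[Cplx R] (J →₀ A) := fun a =>
    Finsupp.mapRange.linearMap (LinearMap.mulLeft (Cplx R) a)
  have hTa : ∀ a f ω, T a f ω = a * f ω := fun a f ω => rfl
  refine Exists.imp (fun ρ hρ => ?_)
    (exists_rep_of_semi (S := S) hP B ?_ ?_ ?_ ?_ T ?_ ?_ ?_ ?_ ?_)
  · intro a b hab ω hω
    have := hρ a b hab (Finsupp.single ⟨ω, hω⟩ 1) (Finsupp.single ⟨ω, hω⟩ 1)
    have hs : ∀ c : A, (T c (Finsupp.single ⟨ω, hω⟩ 1)).support ⊆ {(⟨ω, hω⟩ : J)} := by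
      intro c
      exact (Finsupp.support_mapRange (hf := map_zero (LinearMap.mulLeft (Cplx R) c))).trans
        Finsupp.support_single_subset
    rw [hB _ _ _ (hs a), hB _ _ _ (hs b)] at this
    simpa [hTa, S.star_one] using this
  · intro φ ψ χ
    exact Finsupp.sum_add_index' (fun ω => by rw [mul_zero, h0])
      (fun ω a b => by rw [mul_add, ω.2.1])
  · intro z φ ψ
    rw [hB φ (z • ψ) ψ.support Finsupp.support_smul, hB φ ψ _ subset_rfl, Finset.mul_sum]
    refine Finset.sum_congr rfl fun ω _ => ?_
    rw [Finsupp.smul_apply, mul_smul_comm, ω.2.2.1]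
  · intro φ ψ
    rw [hB φ ψ (φ.support ∪ ψ.support) Finset.subset_union_right,
      hB ψ φ (φ.support ∪ ψ.support) Finset.subset_union_left, map_sum]
    exact Finset.sum_congr rfl fun ω _ => ω.2.herm hP _ _
  · intro φ
    exact Cplx.nonneg_sum hP _ _ fun ω _ => ω.2.2.2 _
  · intro φ
    ext ω
    rw [hTa, one_mul]
  · intro a b φ
    ext ω
    rw [Finsupp.add_apply, hTa, hTa, hTa, add_mul]
  · intro z a φ
    ext ω
    rw [Finsupp.smul_apply, hTa, hTa, smul_mul_assoc]
  · intro a b φ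
    ext ω
    rw [hTa, hTa, hTa, mul_assoc]
  · intro a φ ψ
    rw [hB _ ψ _ subset_rfl, hB φ (T (S.star a) ψ) ψ.support
      (Finsupp.support_mapRange (hf := map_zero (LinearMap.mulLeft (Cplx R) (S.star a))))]
    refine Finset.sum_congr rfl fun ω _ => ?_
    rw [hTa, hTa, S.star_mul, mul_assoc]

end Helpers

/-- A unital `*`-algebra `A` over `C = R(i)` has sufficiently many
positive linear functionals if and only if it has a faithful `*`-representation on
some pre-Hilbert space over `C`; in this case `A` can be viewed as a `*`-subalgebra
of some `B(H)` (the representation `π` being an injective unital `*`-homomorphism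
into the adjointable operators). -/
theorem sufficiently_many_iff_faithful_rep
    (R : Type u) [CommRing R] (P : Set R) (hP : IsOrderedCone P)
    (A : Type v) [Ring A] [Algebra (Cplx R) A] (S : StarStructure R A) :
    HasSufficientlyManyPos P S ↔
      ∃ ρ : StarRep.{u, v, max u v} R P A S, Function.Injective ρ.π := by
  constructor
  · intro hS
    obtain ⟨ρ, hρ⟩ := exists_universal_rep (S := S) hP
    refine ⟨ρ, fun a b hab => ?_⟩
    have hz : ∀ ω, IsPosFunctional P S ω → ω a = ω b := hρ a b hab
    have hneg : ∀ x : A, -x = (-1 : Cplx R) • x := fun x => by rw [neg_one_smul]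
    have sneg : ∀ x : A, S.star (-x) = - S.star x := by
      intro x
      rw [hneg, S.star_smul, map_neg, map_one, neg_one_smul]
    have hc : ∀ ω, IsPosFunctional P S ω → ω (a - b) = 0 := by
      intro ω hω
      rw [sub_eq_add_neg, hω.1, hneg, hω.2.1, hz ω hω, neg_one_mul, add_neg_cancel]
    have hcs : ∀ ω, IsPosFunctional P S ω → ω (S.star (a - b)) = 0 := by
      intro ω hω
      have := hω.herm hP (a - b) 1
      rwa [mul_one, S.star_one, one_mul, hc ω hω, map_zero] at this
    generalize hcd : a - b = c at hc hcs
    have hherm : S.star c = c := by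
      by_contra hne
      have hI : Cplx.I R • (c - S.star c) ≠ 0 := by
        intro h
        have h2 := congrArg (fun x => Cplx.I R • x) h
        simp only [smul_smul, Cplx.I_mul_I, smul_zero, neg_one_smul, neg_eq_zero] at h2
        exact hne (sub_eq_zero.1 h2).symm
      obtain ⟨ω, hω, hne⟩ := hS _ hI (by
        rw [S.star_smul, Cplx.conj_I, sub_eq_add_neg, S.star_add, sneg, S.star_star,
          neg_smul, ← smul_neg]
        congr 1
        abel)
      apply hne
      rw [hω.2.1, sub_eq_add_neg, hω.1, hneg, hω.2.1, hc ω hω, hcs ω hω]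
      simp
    have hc0 : c = 0 := by
      by_contra hne
      obtain ⟨ω, hω, h⟩ := hS c hne hherm
      exact h (hc ω hω)
    exact sub_eq_zero.1 (hcd.trans hc0)
  · rintro ⟨ρ, hρ⟩ h hne hh
    let _ := ρ.grp
    let _ := ρ.mod
    by_contra hcon
    push Not at hcon
    have hadd' : ∀ φ ψ χ, ρ.ip.inner (φ + ψ) χ = ρ.ip.inner φ χ + ρ.ip.inner ψ χ := by
      intro φ ψ χ
      rw [ρ.ip.inner_herm, ρ.ip.inner_add_right, map_add, ← ρ.ip.inner_herm,
        ← ρ.ip.inner_herm]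
    have hsmul' : ∀ (z : Cplx R) φ ψ,
        ρ.ip.inner (z • φ) ψ = Cplx.conj z * ρ.ip.inner φ ψ := by
      intro z φ ψ
      rw [ρ.ip.inner_herm, ρ.ip.inner_smul_right, map_mul, ← ρ.ip.inner_herm]
    have hx : ∀ φ, ρ.ip.inner φ (ρ.π h φ) = 0 := by
      intro φ
      refine hcon (fun a => ρ.ip.inner φ (ρ.π a φ)) ⟨?_, ?_, ?_⟩
      · intro a b
        beta_reduce
        rw [ρ.π_add, ρ.ip.inner_add_right]
      · intro z a
        beta_reduce
        rw [ρ.π_smul, ρ.ip.inner_smul_right]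
      · intro a
        beta_reduce
        rw [ρ.π_mul, ← ρ.π_star]
        by_cases h0 : ρ.π a φ = 0
        · rw [h0, ← zero_smul (Cplx R) (0 : ρ.carrier), ρ.ip.inner_smul_right, zero_mul]
          exact Cplx.nonneg_zero
        · obtain ⟨r, hr, h⟩ := ρ.ip.inner_posdef _ h0
          exact ⟨r, Or.inl hr, h⟩
    have hxy : ∀ φ ψ, ρ.ip.inner φ (ρ.π h ψ) = 0 := by
      intro φ ψ
      have h1 := hx (φ + ψ)
      have h2 := hx (φ + Cplx.I R • ψ)
      simp only [ρ.π_add_vec, ρ.π_smul_vec, ρ.ip.inner_add_right, ρ.ip.inner_smul_right,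
        hadd', hsmul', hx, Cplx.conj_I] at h1 h2
      apply Cplx.two_inj hP
      generalize ρ.ip.inner φ (ρ.π h ψ) = p at *
      generalize ρ.ip.inner ψ (ρ.π h φ) = q at *
      linear_combination h1 - Cplx.I R * h2 + (p - q) * Cplx.I_mul_I (R := R)
    apply hne
    apply hρ
    funext φ
    have hz : ρ.π 0 φ = 0 := by
      rw [← zero_smul (Cplx R) (0 : A), ρ.π_smul, zero_smul]
    rw [hz]
    by_contra hφ
    obtain ⟨r, hr, h3⟩ := ρ.ip.inner_posdef _ hφ
    rw [hxy] at h3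
    exact hP.2.2.2.1 r hr (Cplx.alg_inj (by rw [← h3, map_zero]))
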